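/- arXiv:2402.02459 — 3 statements merged into one kernel-verified Lean document; each statement's English description precedes it below -/
import Mathlib

section
/- Let Σ ∈ S^p and τ > 0. A pair (L, D) with L ∈ S^p_+ and D diagonal is the (unique) global minimizer of F(L',D') = τ‖L'‖_* + (1/2)‖Σ − (L'+D')‖_F² over L' ∈ S^p_+ and diagonal D' if and only if L = D_τ^+(Σ − D) and D = pdiag(Σ − L). -/
open Matrix MeasureTheory ProbabilityTheory BigOperators

/-- `pdiag M`: the matrix `M` with all off-diagonal entries set to zero. -/
def pdiag {p : ℕ} (M : Matrix (Fin p) (Fin p) ℝ) : Matrix (Fin p) (Fin p) ℝ :=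
  Matrix.of fun i j => if i = j then M i j else 0

/-- `poffdiag M = M - pdiag M`: the off-diagonal part of `M`. -/
def poffdiag {p : ℕ} (M : Matrix (Fin p) (Fin p) ℝ) : Matrix (Fin p) (Fin p) ℝ :=
  M - pdiag M

/-- Frobenius norm of a real matrix. -/
noncomputable def frobNorm {p q : ℕ} (M : Matrix (Fin p) (Fin q) ℝ) : ℝ :=
  Real.sqrt (∑ i, ∑ j, (M i j) ^ 2)

/-- The singular values of a real matrix (as the square roots of the eigenvalues of `Mᵀ M`,
in no particular order, with multiplicity, padded by zeros). -/
noncomputable def singVals {p q : ℕ} (M : Matrix (Fin p) (Fin q) ℝ) : Fin q → ℝ :=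
  fun i => Real.sqrt ((Matrix.posSemidef_conjTranspose_mul_self M).isHermitian.eigenvalues i)

/-- Nuclear norm: sum of the singular values. -/
noncomputable def nucNorm {p q : ℕ} (M : Matrix (Fin p) (Fin q) ℝ) : ℝ :=
  ∑ i, singVals M i

/-- Spectral (operator) norm: the largest singular value. -/
noncomputable def specNorm {p q : ℕ} (M : Matrix (Fin p) (Fin q) ℝ) : ℝ :=
  ⨆ i, singVals M i

/-- `(2,∞)`-norm: the maximal Euclidean norm of a row. -/
noncomputable def rowNorm {p r : ℕ} (U : Matrix (Fin p) (Fin r) ℝ) : ℝ :=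
  ⨆ i, Real.sqrt (∑ j, (U i j) ^ 2)

/-- `sinΘ` distance between two column-orthonormal matrices, measured in spectral norm:
`‖sinΘ(U, V)‖ = ‖U Uᵀ - V Vᵀ‖`. -/
noncomputable def sinTheta {p r : ℕ} (U V : Matrix (Fin p) (Fin r) ℝ) : ℝ :=
  specNorm (U * Uᵀ - V * Vᵀ)

/-- `eigDesc M k` : the `k`-th largest eigenvalue (1-indexed) of a symmetric matrix `M`. -/
noncomputable def eigDesc {p : ℕ} (M : Matrix (Fin p) (Fin p) ℝ) (k : ℕ) : ℝ :=
  if h : M.IsHermitian then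
    (((List.ofFn h.eigenvalues).insertionSort (· ≥ ·)).getD (k - 1) 0)
  else 0

/-- `svDesc M k` : the `k`-th largest singular value (1-indexed) of `M`. -/
noncomputable def svDesc {p q : ℕ} (M : Matrix (Fin p) (Fin q) ℝ) (k : ℕ) : ℝ :=
  (((List.ofFn (singVals M)).insertionSort (· ≥ ·)).getD (k - 1) 0)

/-- Eigenvalue soft-thresholding operator `D_τ⁺`: for a symmetric matrix
`M = Σᵢ λᵢ uᵢ uᵢᵀ`, `D_τ⁺(M) = Σᵢ max (λᵢ - τ) 0 • uᵢ uᵢᵀ` (junk value `0` otherwise). -/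
noncomputable def softThresh {p : ℕ} (τ : ℝ) (M : Matrix (Fin p) (Fin p) ℝ) :
    Matrix (Fin p) (Fin p) ℝ :=
  if h : M.IsHermitian then
    (h.eigenvectorUnitary : Matrix (Fin p) (Fin p) ℝ) *
      Matrix.diagonal (fun i => max (h.eigenvalues i - τ) 0) *
      (star (h.eigenvectorUnitary : Matrix (Fin p) (Fin p) ℝ))
  else 0

/-- The `p × r` matrix whose columns are (orthonormal) eigenvectors of the symmetric matrix
`M` corresponding to its `r` largest eigenvalues ("first `r` eigenvectors"). -/
noncomputable def topEigenvectors {p : ℕ} (M : Matrix (Fin p) (Fin p) ℝ) (r : ℕ) :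
    Matrix (Fin p) (Fin r) ℝ :=
  if h : M.IsHermitian then
    Matrix.of fun i (j : Fin r) =>
      if hj : (j : ℕ) < p then
        (h.eigenvectorUnitary : Matrix (Fin p) (Fin p) ℝ) i
          ((Tuple.sort h.eigenvalues) (Fin.rev ⟨(j : ℕ), hj⟩))
      else 0
  else 0

/-- The objective function `F(L, D) = τ ‖L‖_* + (1/2) ‖Σ - (L + D)‖_F²`. -/
noncomputable def objF {p : ℕ} (τ : ℝ) (S L D : Matrix (Fin p) (Fin p) ℝ) : ℝ :=
  τ * nucNorm L + (1 / 2) * (frobNorm (S - (L + D))) ^ 2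

/-- `(L, D)` is a global minimizer of the relaxed-MTFA objective `F` over
`L ∈ S^p₊` and diagonal `D`. -/
def IsRMTFAMin {p : ℕ} (τ : ℝ) (S L D : Matrix (Fin p) (Fin p) ℝ) : Prop :=
  L.PosSemidef ∧ D = pdiag D ∧
    ∀ L' D' : Matrix (Fin p) (Fin p) ℝ, L'.PosSemidef → D' = pdiag D' →
      objF τ S L D ≤ objF τ S L' D'

section RelaxedMTFA

/-!
Expand `F` around `(L, D)`: the change is a first-order term plus `½‖(L' + D') - (L + D)‖_F²`.
At `P = D_τ⁺(Σ - D)` the residual `Σ - D - P` is a subgradient of `τ‖·‖_*` over the positive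
semidefinite cone, and at `D = pdiag(Σ - L)` the residual is orthogonal to all diagonal matrices.
A joint minimizer minimizes `F` in each variable separately, and in each of them the quadratic term
makes the minimizer unique, which gives both equations. Conversely, under both equations the
residual serves both blocks at once, so the first-order term is nonnegative in every feasible
direction.
-/

variable {p q : ℕ}

section FrobeniusNorm

lemma frobNorm_sq (M : Matrix (Fin p) (Fin q) ℝ) : frobNorm M ^ 2 = (Mᵀ * M).trace := by
  rw [frobNorm, Real.sq_sqrt (by positivity), Finset.sum_comm]
  simp only [trace, diag_apply, mul_apply, transpose_apply, sq]

lemma frobNorm_eq_zero_iff {M : Matrix (Fin p) (Fin q) ℝ} : frobNorm M = 0 ↔ M = 0 := by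
  rw [← sq_eq_zero_iff, frobNorm_sq, ← conjTranspose_eq_transpose_of_trivial,
    trace_conjTranspose_mul_self_eq_zero_iff]

lemma frobNorm_sub_sq (A B : Matrix (Fin p) (Fin q) ℝ) :
    frobNorm (A - B) ^ 2 = frobNorm A ^ 2 - 2 * (Aᵀ * B).trace + frobNorm B ^ 2 := by
  have hBA : (Bᵀ * A).trace = (Aᵀ * B).trace := by
    rw [← trace_transpose, transpose_mul, transpose_transpose]
  simp only [frobNorm_sq, transpose_sub, Matrix.sub_mul, Matrix.mul_sub, trace_sub, hBA]
  ring

end FrobeniusNorm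

section Diagonal

variable {D : Matrix (Fin p) (Fin p) ℝ}

lemma isDiag_pdiag (M : Matrix (Fin p) (Fin p) ℝ) : (pdiag M).IsDiag :=
  fun _ _ hij => if_neg hij

lemma eq_pdiag_iff_isDiag : D = pdiag D ↔ D.IsDiag := by
  refine ⟨fun hD => hD ▸ isDiag_pdiag D, fun hD => ?_⟩
  ext i j
  by_cases hij : i = j
  · simp only [pdiag, of_apply, if_pos hij]
  · rw [hD hij, isDiag_pdiag D hij]

lemma trace_poffdiag_transpose_mul (M : Matrix (Fin p) (Fin p) ℝ) (hD : D.IsDiag) :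
    ((poffdiag M)ᵀ * D).trace = 0 := by
  rw [← hD.diagonal_diag]
  refine Finset.sum_eq_zero fun i _ => ?_
  simp [poffdiag, pdiag]

end Diagonal

section SpectralCalculus

open scoped ComplexOrder MatrixOrder

variable {n 𝕜 : Type*} [Fintype n] [RCLike 𝕜]

lemma trace_mul_nonneg_of_posSemidef {A B : Matrix n n 𝕜} (hA : A.PosSemidef)
    (hB : B.PosSemidef) : 0 ≤ (A * B).trace := by
  classical
  obtain ⟨C, rfl⟩ := CStarAlgebra.nonneg_iff_eq_star_mul_self.mp hB.nonneg
  rw [← Matrix.mul_assoc, trace_mul_comm, ← Matrix.mul_assoc]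
  exact (hA.mul_mul_conjTranspose_same C).trace_nonneg

lemma trace_cfc [DecidableEq n] {A : Matrix n n 𝕜} (hA : A.IsHermitian) (f : ℝ → ℝ) :
    (cfc f A).trace = ∑ i, (f (hA.eigenvalues i) : 𝕜) := by
  rw [hA.cfc_eq, IsHermitian.cfc, Unitary.conjStarAlgAut_apply, trace_mul_cycle,
    Unitary.coe_star_mul_self, Matrix.one_mul, trace_diagonal]
  rfl

lemma nucNorm_eq_trace_sqrt (M : Matrix (Fin p) (Fin q) ℝ) :
    nucNorm M = (CFC.sqrt (Mᴴ * M)).trace := by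
  have hM := posSemidef_conjTranspose_mul_self M
  rw [CFC.sqrt_eq_real_sqrt _ hM.nonneg, cfcₙ_eq_cfc, trace_cfc hM.isHermitian]
  rfl

lemma nucNorm_of_posSemidef {L : Matrix (Fin p) (Fin p) ℝ} (hL : L.PosSemidef) :
    nucNorm L = L.trace := by
  rw [nucNorm_eq_trace_sqrt, hL.isHermitian.eq, CFC.sqrt_mul_self L hL.nonneg]

lemma softThresh_eq_posPart (τ : ℝ) {X : Matrix (Fin p) (Fin p) ℝ} (hX : X.IsHermitian) :
    softThresh τ X = (X - algebraMap ℝ _ τ)⁺ := by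
  have hsoft : softThresh τ X = cfc (fun x => (x - τ)⁺) X := by
    rw [softThresh, dif_pos hX, hX.cfc_eq, IsHermitian.cfc, Unitary.conjStarAlgAut_apply]
    rfl
  have hshift : X - algebraMap ℝ _ τ = cfc (fun x => x - τ) X := by
    rw [cfc_sub .., cfc_id' .., cfc_const ..]
  rw [hsoft, hshift, CFC.posPart_def, cfcₙ_eq_cfc, ← cfc_comp' ..]

lemma softThresh_posSemidef (τ : ℝ) {X : Matrix (Fin p) (Fin p) ℝ} (hX : X.IsHermitian) :
    (softThresh τ X).PosSemidef := by
  rw [softThresh_eq_posPart τ hX, ← nonneg_iff_posSemidef]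
  exact CFC.posPart_nonneg _

-- With `N = (X - τ)⁻`, the residual `X - softThresh τ X` is `τ - N`, where `N` is positive
-- semidefinite and annihilates `softThresh τ X = (X - τ)⁺`;
-- hence `τ - N` is a subgradient of `τ‖·‖_*` over the cone.
lemma trace_sub_softThresh_mul_le (τ : ℝ) {X L : Matrix (Fin p) (Fin p) ℝ} (hX : X.IsHermitian)
    (hL : L.PosSemidef) :
    ((X - softThresh τ X)ᵀ * (L - softThresh τ X)).trace ≤
      τ * (nucNorm L - nucNorm (softThresh τ X)) := by
  rw [nucNorm_of_posSemidef hL, nucNorm_of_posSemidef (softThresh_posSemidef τ hX),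
    softThresh_eq_posPart τ hX]
  set M := X - algebraMap ℝ _ τ with hM
  have hMsa : IsSelfAdjoint M := hX.isSelfAdjoint.sub (.algebraMap _ (.all τ))
  have hN : (M⁻).PosSemidef := nonneg_iff_posSemidef.mp (CFC.negPart_nonneg M)
  have hresidual : X - M⁺ = τ • 1 - M⁻ := by
    rw [← Algebra.algebraMap_eq_smul_one, sub_eq_sub_iff_sub_eq_sub, ← hM,
      CFC.posPart_sub_negPart M]
  calc ((X - M⁺)ᵀ * (L - M⁺)).trace
      = τ * (L.trace - (M⁺).trace) - (M⁻ * L).trace + (M⁻ * M⁺).trace := by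
        rw [hresidual, transpose_sub, transpose_smul, transpose_one,
          ← conjTranspose_eq_transpose_of_trivial, hN.isHermitian.eq]
        simp only [Matrix.sub_mul, Matrix.mul_sub, smul_mul, Matrix.one_mul, trace_sub,
          trace_smul, smul_eq_mul]
        ring
    _ ≤ τ * (L.trace - (M⁺).trace) := by
        rw [CFC.negPart_mul_posPart, trace_zero, add_zero]
        exact sub_le_self _ (trace_mul_nonneg_of_posSemidef hN hL)

end SpectralCalculus

section Objective

variable {τ : ℝ} {S L D L' D' : Matrix (Fin p) (Fin p) ℝ}

lemma objF_eq_add (τ : ℝ) (S L D L' D' : Matrix (Fin p) (Fin p) ℝ) :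
    objF τ S L' D' = objF τ S L D + τ * (nucNorm L' - nucNorm L) -
      ((S - (L + D))ᵀ * (L' + D' - (L + D))).trace +
      1 / 2 * frobNorm (L' + D' - (L + D)) ^ 2 := by
  have hres : S - (L' + D') = S - (L + D) - (L' + D' - (L + D)) := by abel
  rw [objF, objF, hres, frobNorm_sub_sq]
  ring

lemma objF_softThresh_add_le (hSD : (S - D).IsHermitian) (hL' : L'.PosSemidef)
    (D' : Matrix (Fin p) (Fin p) ℝ) :
    objF τ S (softThresh τ (S - D)) D -
      ((S - (softThresh τ (S - D) + D))ᵀ * (D' - D)).trace +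
      1 / 2 * frobNorm (L' + D' - (softThresh τ (S - D) + D)) ^ 2 ≤ objF τ S L' D' := by
  have hsub := trace_sub_softThresh_mul_le τ hSD hL'
  rw [objF_eq_add τ S (softThresh τ (S - D)) D L' D', add_sub_add_comm, Matrix.mul_add, trace_add,
    add_comm (softThresh τ (S - D)) D, ← sub_sub]
  linarith

lemma eq_softThresh_of_objF_le (hSD : (S - D).IsHermitian) (hL : L.PosSemidef)
    (hle : objF τ S L D ≤ objF τ S (softThresh τ (S - D)) D) : L = softThresh τ (S - D) := by
  have hgrowth := objF_softThresh_add_le (τ := τ) hSD hL D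
  simp only [sub_self, Matrix.mul_zero, trace_zero, sub_zero, add_sub_add_right_eq_sub] at hgrowth
  rw [← sub_eq_zero, ← frobNorm_eq_zero_iff, ← sq_nonpos_iff]
  linarith

lemma objF_eq_objF_pdiag_add (τ : ℝ) (S L : Matrix (Fin p) (Fin p) ℝ) (hD : D.IsDiag) :
    objF τ S L D = objF τ S L (pdiag (S - L)) + 1 / 2 * frobNorm (D - pdiag (S - L)) ^ 2 := by
  have horth := trace_poffdiag_transpose_mul (S - L) (hD.sub (isDiag_pdiag (S - L)))
  rw [objF_eq_add τ S L (pdiag (S - L)) L D, ← sub_sub, ← poffdiag, add_sub_add_left_eq_sub, horth]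
  ring

lemma eq_pdiag_of_objF_le (hD : D.IsDiag) (hle : objF τ S L D ≤ objF τ S L (pdiag (S - L))) :
    D = pdiag (S - L) := by
  rw [objF_eq_objF_pdiag_add τ S L hD] at hle
  rw [← sub_eq_zero, ← frobNorm_eq_zero_iff, ← sq_nonpos_iff]
  linarith

lemma objF_le_of_fixed_point (hSD : (S - D).IsHermitian) (hL : L = softThresh τ (S - D))
    (hD : D = pdiag (S - L)) (hL' : L'.PosSemidef) (hD' : D'.IsDiag) :
    objF τ S L D ≤ objF τ S L' D' := by
  have hres : S - (L + D) = poffdiag (S - L) := by rw [← sub_sub, poffdiag, ← hD]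
  have horth : ((S - (L + D))ᵀ * (D' - D)).trace = 0 := by
    rw [hres, trace_poffdiag_transpose_mul _ (hD'.sub (hD ▸ isDiag_pdiag _))]
  have hgrowth := objF_softThresh_add_le (τ := τ) hSD hL' D'
  rw [← hL, horth] at hgrowth
  linarith [sq_nonneg (frobNorm (L' + D' - (L + D)))]

end Objective

end RelaxedMTFA

/-- fixed-point characterization: a pair `(L, D)` with `L ∈ S^p₊` and `D`
diagonal is the global minimizer of the relaxed-MTFA objective iff
`L = D_τ⁺(Σ − D)` and `D = pdiag(Σ − L)`. -/
theorem rmtfa_fixed_point_iff (p : ℕ) (S : Matrix (Fin p) (Fin p) ℝ) (hS : S.IsHermitian)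
    (τ : ℝ) (hτ : 0 < τ)
    (L D : Matrix (Fin p) (Fin p) ℝ) (hL : L.PosSemidef) (hD : D = pdiag D) :
    (∀ L' D' : Matrix (Fin p) (Fin p) ℝ, L'.PosSemidef → D' = pdiag D' →
        objF τ S L D ≤ objF τ S L' D') ↔
    (L = softThresh τ (S - D) ∧ D = pdiag (S - L)) := by
  have hDiag : D.IsDiag := eq_pdiag_iff_isDiag.mp hD
  have hSD : (S - D).IsHermitian := hS.sub hDiag.isSymm
  constructor
  · intro hmin
    exact ⟨eq_softThresh_of_objF_le hSD hL (hmin _ D (softThresh_posSemidef τ hSD) hD),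
      eq_pdiag_of_objF_le hDiag (hmin L _ hL (eq_pdiag_iff_isDiag.mpr (isDiag_pdiag _)))⟩
  · rintro ⟨hfixL, hfixD⟩ L' D' hL' hD'
    exact objF_le_of_fixed_point hSD hfixL hfixD hL' (eq_pdiag_iff_isDiag.mp hD')
end

section
/- Let Σ ∈ S^p and 0 < ψ < ‖poffdiag(Σ)‖_F². If (L̂, D̂) is a global minimizer of the constrained problem: minimize ‖L‖_* over L ∈ S^p_+ and diagonal D subject to ‖Σ − (L+D)‖_F² ≤ ψ, then the constraint is active: ‖Σ − (L̂ + D̂)‖_F² = ψ. -/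
open Matrix MeasureTheory ProbabilityTheory BigOperators

/-! A minimizer with slack in the constraint is a local minimizer of the nuclear norm over all
admissible `L`. The nuclear norm strictly decreases along the segment from `L ≠ 0` to `0`, so
`L = 0`; but then the residual is `S - D`, which has the same off-diagonal part as `S` and hence
violates the constraint. -/

open Filter Set Topology

theorem isLocalMinOn_of_isMinOn_sep_le {X α β : Type*} [TopologicalSpace X] [Preorder α]
    [LinearOrder β] [TopologicalSpace β] [OrderClosedTopology β] {f : X → α} {g : X → β}
    {s : Set X} {x : X} {b : β} (hmin : IsMinOn f {y ∈ s | g y ≤ b} x)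
    (hg : ContinuousAt g x) (hlt : g x < b) : IsLocalMinOn f s x := by
  filter_upwards [(hg.eventually_lt_const hlt).filter_mono nhdsWithin_le_nhds,
    self_mem_nhdsWithin] with y hy hys
  exact hmin ⟨hys, hy.le⟩

theorem nonpos_of_isLocalMinOn_of_smul_le {E : Type*} [AddCommGroup E] [Module ℝ E]
    [TopologicalSpace E] [ContinuousSMul ℝ E] {f : E → ℝ} {s : Set E} {x : E}
    (hmin : IsLocalMinOn f s x) (hs : StarConvex ℝ 0 s) (hx : x ∈ s)
    (hf : ∀ c ∈ Ioo (0 : ℝ) 1, f (c • x) ≤ c * f x) : f x ≤ 0 := by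
  have hsegment : Tendsto (fun c : ℝ => c • x) (𝓝[<] 1) (𝓝[s] x) := by
    refine tendsto_nhdsWithin_iff.mpr ⟨?_, ?_⟩
    · have hcont : Continuous fun c : ℝ => c • x := by fun_prop
      simpa only [one_smul] using (hcont.tendsto 1).mono_left nhdsWithin_le_nhds
    · filter_upwards [Ioo_mem_nhdsLT zero_lt_one] with c hc
      exact hs.smul_mem hx hc.1.le hc.2.le
  obtain ⟨c, hle, hc⟩ :=
    ((hsegment.eventually hmin).and (Ioo_mem_nhdsLT zero_lt_one)).exists
  have hscale : f x ≤ c * f x := hle.trans (hf c hc)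
  nlinarith [hc.2]

open scoped ComplexOrder in
theorem starConvex_setOf_posSemidef {n 𝕜 : Type*} [RCLike 𝕜] :
    StarConvex ℝ 0 {L : Matrix n n 𝕜 | L.PosSemidef} :=
  starConvex_zero_iff.mpr fun _ hL _ hc _ => PosSemidef.smul hL hc

theorem trace_cfc_eq_sum_eigenvalues {n 𝕜 : Type*} [Fintype n] [DecidableEq n] [RCLike 𝕜]
    {A : Matrix n n 𝕜} (hA : A.IsHermitian) (f : ℝ → ℝ) :
    (cfc f A).trace = ∑ i, (f (hA.eigenvalues i) : 𝕜) := by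
  rw [hA.cfc_eq, IsHermitian.cfc, Unitary.conjStarAlgAut_apply, trace_mul_cycle]
  simp [trace_diagonal]

section NuclearNorm

variable {p q : ℕ}

theorem nucNorm_eq_trace_cfc_sqrt (M : Matrix (Fin p) (Fin q) ℝ) :
    nucNorm M = (cfc Real.sqrt (Mᴴ * M)).trace :=
  (trace_cfc_eq_sum_eigenvalues _ _).symm

theorem nucNorm_smul (c : ℝ) (M : Matrix (Fin p) (Fin q) ℝ) :
    nucNorm (c • M) = |c| * nucNorm M := by
  have hgram : (c • M)ᴴ * (c • M) = c ^ 2 • (Mᴴ * M) := by simp [smul_smul, sq]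
  have hcfc : cfc Real.sqrt (c ^ 2 • (Mᴴ * M)) = cfc (fun x => √(c ^ 2 * x)) (Mᴴ * M) :=
    (cfc_comp_const_mul _ _ _ (by fun_prop) (isHermitian_conjTranspose_mul_self M)).symm
  rw [nucNorm_eq_trace_cfc_sqrt, hgram, hcfc,
    trace_cfc_eq_sum_eigenvalues (isHermitian_conjTranspose_mul_self M)]
  simp [nucNorm, singVals, Real.sqrt_mul (sq_nonneg c), Real.sqrt_sq_eq_abs, Finset.mul_sum]

theorem eq_zero_of_nucNorm_nonpos {M : Matrix (Fin p) (Fin q) ℝ} (h : nucNorm M ≤ 0) : M = 0 := by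
  have hM := posSemidef_conjTranspose_mul_self M
  have hsing : ∀ i, singVals M i = 0 := by
    have hnonneg : ∀ i ∈ Finset.univ, 0 ≤ singVals M i := fun _ _ => Real.sqrt_nonneg _
    simpa using (Finset.sum_eq_zero_iff_of_nonneg hnonneg).mp
      (h.antisymm (Finset.sum_nonneg hnonneg))
  have heig : hM.isHermitian.eigenvalues = 0 :=
    funext fun i => (Real.sqrt_eq_zero (hM.eigenvalues_nonneg i)).mp (hsing i)
  exact conjTranspose_mul_self_eq_zero.mp (hM.isHermitian.eigenvalues_eq_zero_iff.mp heig)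

theorem eq_zero_of_isLocalMinOn_nucNorm {K : Set (Matrix (Fin p) (Fin q) ℝ)}
    {L : Matrix (Fin p) (Fin q) ℝ} (hmin : IsLocalMinOn nucNorm K L) (hK : StarConvex ℝ 0 K)
    (hL : L ∈ K) : L = 0 :=
  eq_zero_of_nucNorm_nonpos <| nonpos_of_isLocalMinOn_of_smul_le hmin hK hL fun c hc => by
    rw [nucNorm_smul, abs_of_pos hc.1]

end NuclearNorm

section Frobenius

variable {p q : ℕ}

theorem continuous_frobNorm : Continuous (frobNorm : Matrix (Fin p) (Fin q) ℝ → ℝ) := by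
  unfold frobNorm
  fun_prop

theorem frobNorm_le_frobNorm {M N : Matrix (Fin p) (Fin q) ℝ}
    (h : ∀ i j, |M i j| ≤ |N i j|) : frobNorm M ≤ frobNorm N :=
  Real.sqrt_le_sqrt <| Finset.sum_le_sum fun i _ => Finset.sum_le_sum fun j _ =>
    sq_le_sq.mpr (h i j)

theorem poffdiag_apply (M : Matrix (Fin p) (Fin p) ℝ) (i j : Fin p) :
    poffdiag M i j = if i = j then 0 else M i j := by
  simp [poffdiag, pdiag, sub_ite]

theorem frobNorm_poffdiag_le (M : Matrix (Fin p) (Fin p) ℝ) :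
    frobNorm (poffdiag M) ≤ frobNorm M :=
  frobNorm_le_frobNorm fun i j => by
    rw [poffdiag_apply]
    split_ifs <;> simp

theorem poffdiag_sub_pdiag (M D : Matrix (Fin p) (Fin p) ℝ) :
    poffdiag (M - pdiag D) = poffdiag M := by
  ext i j
  simp +contextual [poffdiag_apply, pdiag]

end Frobenius

theorem constrained_min_constraint_active_general {p : ℕ} {S : Matrix (Fin p) (Fin p) ℝ} {ψ : ℝ}
    (hψ : ψ < frobNorm (poffdiag S) ^ 2) {K : Set (Matrix (Fin p) (Fin p) ℝ)}
    (hK : StarConvex ℝ 0 K) {L D : Matrix (Fin p) (Fin p) ℝ} (hL : L ∈ K) (hD : D = pdiag D)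
    (hfeas : frobNorm (S - (L + D)) ^ 2 ≤ ψ)
    (hmin : IsMinOn nucNorm {L' ∈ K | frobNorm (S - (L' + D)) ^ 2 ≤ ψ} L) :
    frobNorm (S - (L + D)) ^ 2 = ψ := by
  refine hfeas.eq_of_not_lt fun hslack => ?_
  have hcont : Continuous fun L' => frobNorm (S - (L' + D)) ^ 2 :=
    (continuous_frobNorm.comp (by fun_prop)).pow 2
  have hlocal : IsLocalMinOn nucNorm K L :=
    isLocalMinOn_of_isMinOn_sep_le hmin hcont.continuousAt hslack
  obtain rfl : L = 0 := eq_zero_of_isLocalMinOn_nucNorm hlocal hK hL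
  have hoffdiag : frobNorm (poffdiag S) ≤ frobNorm (S - (0 + D)) := by
    rw [zero_add, hD, ← poffdiag_sub_pdiag S D]
    exact frobNorm_poffdiag_le _
  exact (hψ.trans_le (pow_le_pow_left₀ (Real.sqrt_nonneg _) hoffdiag 2)).not_ge hfeas

/-- if `0 < ψ < ‖poffdiag Σ‖_F²`, the constraint at a global minimizer of
the constrained problem is active: `‖Σ − (L̂ + D̂)‖_F² = ψ`. -/
theorem constrained_min_constraint_active (p : ℕ) (S : Matrix (Fin p) (Fin p) ℝ)
    (hS : S.IsHermitian) (ψ : ℝ) (hψ0 : 0 < ψ) (hψ1 : ψ < (frobNorm (poffdiag S)) ^ 2)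
    (Lhat Dhat : Matrix (Fin p) (Fin p) ℝ)
    (hfeas : Lhat.PosSemidef ∧ Dhat = pdiag Dhat ∧
      (frobNorm (S - (Lhat + Dhat))) ^ 2 ≤ ψ)
    (hopt : ∀ L D : Matrix (Fin p) (Fin p) ℝ, L.PosSemidef → D = pdiag D →
      (frobNorm (S - (L + D))) ^ 2 ≤ ψ → nucNorm Lhat ≤ nucNorm L) :
    (frobNorm (S - (Lhat + Dhat))) ^ 2 = ψ :=
  constrained_min_constraint_active_general hψ1 starConvex_setOf_posSemidef hfeas.1 hfeas.2.1
    hfeas.2.2 fun L hL => hopt L Dhat hL.1 hfeas.2.1 hL.2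
end

section
/- For every τ > 0 and all M₁, M₂ ∈ S^p, the eigenvalue soft-thresholding operator is nonexpansive in Frobenius norm: ‖D_τ^+(M₁) − D_τ^+(M₂)‖_F ≤ ‖M₁ − M₂‖_F. -/
open Matrix MeasureTheory ProbabilityTheory BigOperators

/-! In eigenbases `U` of `A` and `V` of `B`, the `(i, j)` entry of `U* (f(A) X - X f(B)) V` is
`(f(aᵢ) - f(bⱼ)) (U* X V)ᵢⱼ`. If `f` is `K`-Lipschitz, this is bounded by `K` times the same entry
for `f = id`, and the Frobenius norm is unitarily invariant. Soft-thresholding is the case of the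
`1`-Lipschitz function `x ↦ max (x - τ) 0` and `X = 1`. -/

section Frobenius

open scoped Matrix.Norms.Frobenius NNReal

variable {𝕜 m n : Type*} [RCLike 𝕜] [Fintype m] [Fintype n]

theorem frobenius_norm_sq {α : Type*} [SeminormedAddCommGroup α] (M : Matrix m n α) :
    ‖M‖ ^ 2 = ∑ i, ∑ j, ‖M i j‖ ^ 2 := by
  simp_rw [frobenius_norm_def, ← Real.sqrt_eq_rpow, Real.rpow_two]
  exact Real.sq_sqrt (by positivity)

theorem frobNorm_eq_frobenius_norm {p q : ℕ} (M : Matrix (Fin p) (Fin q) ℝ) :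
    frobNorm M = ‖M‖ := by
  rw [← Real.sqrt_sq (norm_nonneg M), frobenius_norm_sq]
  simp only [frobNorm, Real.norm_eq_abs, sq_abs]

theorem frobenius_norm_le_mul_of_forall_le {α β : Type*} [SeminormedAddCommGroup α]
    [SeminormedAddCommGroup β] {c : ℝ≥0} {M : Matrix m n α} {N : Matrix m n β}
    (h : ∀ i j, ‖M i j‖ ≤ c * ‖N i j‖) : ‖M‖ ≤ c * ‖N‖ := by
  refine le_of_sq_le_sq ?_ (by positivity)
  simp_rw [mul_pow, frobenius_norm_sq, Finset.mul_sum, ← mul_pow]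
  gcongr with i _ j _
  exact h i j

theorem frobenius_norm_sq_eq_re_trace (M : Matrix m n 𝕜) :
    ‖M‖ ^ 2 = RCLike.re (Mᴴ * M).trace := by
  simp_rw [frobenius_norm_sq, trace, diag_apply, mul_apply, conjTranspose_apply, map_sum,
    RCLike.star_def, RCLike.conj_mul, ← RCLike.ofReal_pow, RCLike.ofReal_re]
  exact Finset.sum_comm

theorem frobenius_norm_unitary_mul [DecidableEq m] (U : unitaryGroup m 𝕜) (M : Matrix m n 𝕜) :
    ‖(U : Matrix m m 𝕜) * M‖ = ‖M‖ := by
  have gram_eq : ((U : Matrix m m 𝕜) * M)ᴴ * ((U : Matrix m m 𝕜) * M) = Mᴴ * M := by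
    rw [conjTranspose_mul, Matrix.mul_assoc, ← Matrix.mul_assoc _ _ M, ← star_eq_conjTranspose,
      Unitary.coe_star_mul_self, Matrix.one_mul]
  rw [← sq_eq_sq₀ (norm_nonneg _) (norm_nonneg _), frobenius_norm_sq_eq_re_trace, gram_eq,
    frobenius_norm_sq_eq_re_trace]

theorem frobenius_norm_mul_unitary [DecidableEq n] (M : Matrix m n 𝕜) (V : unitaryGroup n 𝕜) :
    ‖M * (V : Matrix n n 𝕜)‖ = ‖M‖ := by
  rw [← frobenius_norm_conjTranspose, conjTranspose_mul, ← star_eq_conjTranspose V.1,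
    ← Unitary.coe_star, frobenius_norm_unitary_mul, frobenius_norm_conjTranspose]

variable [DecidableEq m] [DecidableEq n] {A : Matrix m m 𝕜} {B : Matrix n n 𝕜}

theorem cfc_eq_eigenvectorUnitary_mul_diagonal_mul_star (hA : A.IsHermitian) (f : ℝ → ℝ) :
    cfc f A = (hA.eigenvectorUnitary : Matrix m m 𝕜) *
      diagonal (fun i => (f (hA.eigenvalues i) : 𝕜)) *
        star (hA.eigenvectorUnitary : Matrix m m 𝕜) := by
  rw [hA.cfc_eq, IsHermitian.cfc, Unitary.conjStarAlgAut_apply]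
  rfl

theorem star_eigenvectorUnitary_mul_cfc (hA : A.IsHermitian) (f : ℝ → ℝ) :
    star (hA.eigenvectorUnitary : Matrix m m 𝕜) * cfc f A =
      diagonal (fun i => (f (hA.eigenvalues i) : 𝕜)) *
        star (hA.eigenvectorUnitary : Matrix m m 𝕜) := by
  rw [cfc_eq_eigenvectorUnitary_mul_diagonal_mul_star hA, Matrix.mul_assoc, ← Matrix.mul_assoc,
    Unitary.coe_star_mul_self, Matrix.one_mul]

theorem cfc_mul_eigenvectorUnitary (hA : A.IsHermitian) (f : ℝ → ℝ) :
    cfc f A * (hA.eigenvectorUnitary : Matrix m m 𝕜) =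
      (hA.eigenvectorUnitary : Matrix m m 𝕜) *
        diagonal (fun i => (f (hA.eigenvalues i) : 𝕜)) := by
  rw [cfc_eq_eigenvectorUnitary_mul_diagonal_mul_star hA, Matrix.mul_assoc,
    Unitary.coe_star_mul_self, Matrix.mul_one]

theorem cfc_mul_sub_mul_cfc_eigenvectorUnitary_apply (hA : A.IsHermitian)
    (hB : B.IsHermitian) (f : ℝ → ℝ) (X : Matrix m n 𝕜) (i : m) (j : n) :
    (star (hA.eigenvectorUnitary : Matrix m m 𝕜) * (cfc f A * X - X * cfc f B) *
        (hB.eigenvectorUnitary : Matrix n n 𝕜)) i j =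
      ((f (hA.eigenvalues i) - f (hB.eigenvalues j) : ℝ) : 𝕜) *
        (star (hA.eigenvectorUnitary : Matrix m m 𝕜) * X *
          (hB.eigenvectorUnitary : Matrix n n 𝕜)) i j := by
  set U := (hA.eigenvectorUnitary : Matrix m m 𝕜)
  set V := (hB.eigenvectorUnitary : Matrix n n 𝕜)
  have diagonalize_left : star U * (cfc f A * X) * V =
      diagonal (fun i => (f (hA.eigenvalues i) : 𝕜)) * (star U * X * V) := by
    simp only [U, ← Matrix.mul_assoc, star_eigenvectorUnitary_mul_cfc hA]
  have diagonalize_right : star U * (X * cfc f B) * V =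
      star U * X * V * diagonal (fun j => (f (hB.eigenvalues j) : 𝕜)) := by
    simp only [V, Matrix.mul_assoc, cfc_mul_eigenvectorUnitary hB]
  rw [Matrix.mul_sub, Matrix.sub_mul, diagonalize_left, diagonalize_right, Matrix.sub_apply,
    diagonal_mul, mul_diagonal, RCLike.ofReal_sub]
  ring

theorem frobenius_norm_cfc_mul_sub_mul_cfc_le (hA : A.IsHermitian) (hB : B.IsHermitian)
    {K : ℝ≥0} {s : Set ℝ} {f : ℝ → ℝ} (hf : LipschitzOnWith K f s)
    (hAs : spectrum ℝ A ⊆ s) (hBs : spectrum ℝ B ⊆ s) (X : Matrix m n 𝕜) :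
    ‖cfc f A * X - X * cfc f B‖ ≤ K * ‖A * X - X * B‖ := by
  have norm_eq_in_eigenbases (M : Matrix m n 𝕜) :
      ‖star (hA.eigenvectorUnitary : Matrix m m 𝕜) * M *
        (hB.eigenvectorUnitary : Matrix n n 𝕜)‖ = ‖M‖ := by
    rw [frobenius_norm_mul_unitary, ← Unitary.coe_star, frobenius_norm_unitary_mul]
  nth_rw 2 [← cfc_id ℝ A hA.isSelfAdjoint, ← cfc_id ℝ B hB.isSelfAdjoint]
  rw [← norm_eq_in_eigenbases, ← norm_eq_in_eigenbases (cfc id A * X - X * cfc id B)]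
  refine frobenius_norm_le_mul_of_forall_le fun i j => ?_
  simp only [cfc_mul_sub_mul_cfc_eigenvectorUnitary_apply, norm_mul,
    RCLike.norm_ofReal, id_eq, ← mul_assoc, ← Real.dist_eq]
  gcongr
  exact hf.dist_le_mul _ (hAs (hA.eigenvalues_mem_spectrum_real i)) _
    (hBs (hB.eigenvalues_mem_spectrum_real j))

theorem frobenius_norm_cfc_sub_cfc_le {A B : Matrix n n 𝕜} (hA : A.IsHermitian)
    (hB : B.IsHermitian) {K : ℝ≥0} {s : Set ℝ} {f : ℝ → ℝ} (hf : LipschitzOnWith K f s)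
    (hAs : spectrum ℝ A ⊆ s) (hBs : spectrum ℝ B ⊆ s) :
    ‖cfc f A - cfc f B‖ ≤ K * ‖A - B‖ := by
  simpa only [Matrix.mul_one, Matrix.one_mul] using
    frobenius_norm_cfc_mul_sub_mul_cfc_le hA hB hf hAs hBs 1

theorem lipschitzWith_max_sub_zero (τ : ℝ) : LipschitzWith 1 (fun x : ℝ => max (x - τ) 0) :=
  (IsometryEquiv.subRight τ).isometry.lipschitz.max_const 0

theorem softThresh_nonexpansive_general (τ : ℝ) {A B : Matrix n n 𝕜} (hA : A.IsHermitian)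
    (hB : B.IsHermitian) :
    ‖cfc (fun x => max (x - τ) 0) A - cfc (fun x => max (x - τ) 0) B‖ ≤ ‖A - B‖ := by
  simpa only [NNReal.coe_one, one_mul] using
    frobenius_norm_cfc_sub_cfc_le hA hB (lipschitzWith_max_sub_zero τ).lipschitzOnWith
      (Set.subset_univ _) (Set.subset_univ _)

theorem softThresh_eq_cfc {p : ℕ} (τ : ℝ) {M : Matrix (Fin p) (Fin p) ℝ} (hM : M.IsHermitian) :
    softThresh τ M = cfc (fun x => max (x - τ) 0) M := by
  rw [softThresh, dif_pos hM, cfc_eq_eigenvectorUnitary_mul_diagonal_mul_star hM]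
  rfl

end Frobenius

/-- the eigenvalue soft-thresholding operator is nonexpansive in
Frobenius norm on `S^p`. -/
theorem softThresh_nonexpansive (p : ℕ) (τ : ℝ) (hτ : 0 < τ)
    (M₁ M₂ : Matrix (Fin p) (Fin p) ℝ) (h₁ : M₁.IsHermitian) (h₂ : M₂.IsHermitian) :
    frobNorm (softThresh τ M₁ - softThresh τ M₂) ≤ frobNorm (M₁ - M₂) := by
  simpa only [frobNorm_eq_frobenius_norm, softThresh_eq_cfc τ h₁, softThresh_eq_cfc τ h₂]
    using softThresh_nonexpansive_general τ h₁ h₂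
end
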